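/- For every γ ∈ (0,1) there exists ζ > 0 such that m_γ = inf of G_γ(y) over all y ∈ M_ζ with ‖y‖_{W¹₂[0,1]} = 1. -/

import Mathlib

open MeasureTheory Set Real

noncomputable section

/-- Pairs `(y, y')` representing a function of Sobolev class `W¹₂[0,1]`:
`y` is absolutely continuous on `[0,1]` (being an integral of `y'`)
with derivative `y'` belonging to `L²[0,1]`. -/
def W12 : Set ((ℝ → ℝ) × (ℝ → ℝ)) :=
  {p | (∀ x ∈ Icc (0:ℝ) 1, p.1 x = p.1 0 + ∫ t in (0:ℝ)..x, p.2 t) ∧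
    IntervalIntegrable p.2 volume 0 1 ∧
    IntervalIntegrable (fun t => (p.2 t) ^ 2) volume 0 1}

/-- The Rayleigh quotient `(∫₀¹ ((y')² + q y²) dx) / (∫₀¹ y² dx)`. -/
def Rayleigh (q : ℝ → ℝ) (p : (ℝ → ℝ) × (ℝ → ℝ)) : ℝ :=
  (∫ t in (0:ℝ)..1, ((p.2 t) ^ 2 + q t * (p.1 t) ^ 2)) /
    ∫ t in (0:ℝ)..1, (p.1 t) ^ 2

/-- The smallest eigenvalue `λ₁(q)` of the Neumann problem `-y'' + q y = λ y`,
`y'(0) = y'(1) = 0`, defined as the infimum of Rayleigh quotients over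
nonzero `y ∈ W¹₂[0,1]`. -/
def lambda1 (q : ℝ → ℝ) : ℝ :=
  sInf {r | ∃ p ∈ W12, 0 < (∫ t in (0:ℝ)..1, (p.1 t) ^ 2) ∧ r = Rayleigh q p}

/-- The class `A_γ` of potentials: `q ∈ L¹[0,1]`, `q ≥ 0` a.e. on `[0,1]`,
`∫₀¹ q^γ dx = 1`. -/
def Agamma (γ : ℝ) : Set (ℝ → ℝ) :=
  {q | IntervalIntegrable q volume 0 1 ∧
    (∀ᵐ t ∂(volume.restrict (Icc (0:ℝ) 1)), 0 ≤ q t) ∧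
    (∫ t in (0:ℝ)..1, q t ^ γ) = 1}

/-- `m_γ := inf_{q ∈ A_γ} λ₁(q)`. -/
def mGamma (γ : ℝ) : ℝ := sInf (lambda1 '' Agamma γ)

/-- The set `M` of uniformly positive functions of class `W¹₂[0,1]`. -/
def Mset : Set ((ℝ → ℝ) × (ℝ → ℝ)) :=
  {p ∈ W12 | ∃ ζ > (0:ℝ), ∀ x ∈ Icc (0:ℝ) 1, ζ ≤ p.1 x}

/-- `J_γ(y) := ∫₀¹ (y')² dx + (∫₀¹ y^{2γ/(γ−1)} dx)^{(γ−1)/γ}`. -/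
def Jg (γ : ℝ) (p : (ℝ → ℝ) × (ℝ → ℝ)) : ℝ :=
  (∫ t in (0:ℝ)..1, (p.2 t) ^ 2) +
    (∫ t in (0:ℝ)..1, (p.1 t) ^ (2 * γ / (γ - 1))) ^ ((γ - 1) / γ)

/-- `G_γ(y) := J_γ(y) / ∫₀¹ y² dx`. -/
def Gg (γ : ℝ) (p : (ℝ → ℝ) × (ℝ → ℝ)) : ℝ :=
  Jg γ p / ∫ t in (0:ℝ)..1, (p.1 t) ^ 2

/-!
For a positive `y`, the reverse Hölder inequality bounds `∫ q y²` from below on `A_γ` by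
`(∫ y^{2γ/(γ-1)})^{(γ-1)/γ}`, with equality for the potential proportional to `y^{2/(γ-1)}`. Hence
`G_γ(y)` is the least value of the Rayleigh quotient of `y` over `A_γ`, and `m_γ ≤ G_γ(y)`.

For the converse, the constant function `1` gives `m_γ ≤ G_γ(1) = 1`, and it settles the case of
equality. If `m_γ < κ < 1`, then a nearly optimal pair `(q, y)` satisfies `∫ y'² ≤ κ ∫ y²`. By
Cauchy–Schwarz the oscillation of `y` is at most `√κ ‖y‖`, with `‖·‖` the norm of `L²`, whereas
`|y|` takes the value `‖y‖` somewhere. So `y` or `-y` is at least `(1 - √κ) ‖y‖`, and normalizing in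
`W¹₂` costs at most a factor `√2` because `‖y'‖ ≤ ‖y‖`.
-/

section Hoelder

variable {α : Type*} [MeasurableSpace α] {μ : Measure α} {f g w : α → ℝ}

lemma memLp_rpow_of_integrable {s : ℝ} (hs : 0 < s) (hf0 : 0 ≤ᵐ[μ] f) (hf : Integrable f μ) :
    MemLp (fun x => f x ^ s) (ENNReal.ofReal (1 / s)) μ := by
  have h := (memLp_one_iff_integrable.2 hf).norm_rpow_div (ENNReal.ofReal s)
  rw [ENNReal.toReal_ofReal hs.le, ← ENNReal.ofReal_one, ← ENNReal.ofReal_div_of_pos hs] at h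
  refine h.ae_eq ?_
  filter_upwards [hf0] with x hx
  rw [Real.norm_of_nonneg hx]

lemma integral_rpow_mul_rpow_le {s : ℝ} (hs : s ∈ Ioo (0 : ℝ) 1) (hf0 : 0 ≤ᵐ[μ] f)
    (hg0 : 0 ≤ᵐ[μ] g) (hf : Integrable f μ) (hg : Integrable g μ) :
    ∫ x, f x ^ s * g x ^ (1 - s) ∂μ ≤ (∫ x, f x ∂μ) ^ s * (∫ x, g x ∂μ) ^ (1 - s) := by
  have hs' : 0 < 1 - s := sub_pos.2 hs.2
  have hconj : (1 / s).HolderConjugate (1 / (1 - s)) :=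
    Real.holderConjugate_one_div hs.1 hs' (add_sub_cancel s 1)
  have rpow_rpow_one_div {h : α → ℝ} {e : ℝ} (he : e ≠ 0) (h0 : 0 ≤ᵐ[μ] h) :
      ∫ x, (h x ^ e) ^ (1 / e) ∂μ = ∫ x, h x ∂μ := by
    refine integral_congr_ae ?_
    filter_upwards [h0] with x hx
    rw [one_div, Real.rpow_rpow_inv hx he]
  have h := integral_mul_le_Lp_mul_Lq_of_nonneg hconj
    (hf0.mono fun x hx => Real.rpow_nonneg hx s) (hg0.mono fun x hx => Real.rpow_nonneg hx (1 - s))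
    (memLp_rpow_of_integrable hs.1 hf0 hf) (memLp_rpow_of_integrable hs' hg0 hg)
  rwa [rpow_rpow_one_div hs.1.ne' hf0, rpow_rpow_one_div hs'.ne' hg0, one_div_one_div,
    one_div_one_div] at h

lemma integral_rpow_le_integral_mul_rpow {γ : ℝ} (hγ : γ ∈ Ioo (0 : ℝ) 1) (hf0 : 0 ≤ᵐ[μ] f)
    (hw0 : ∀ᵐ x ∂μ, 0 < w x) (hfw : Integrable (fun x => f x * w x) μ)
    (hw : Integrable (fun x => w x ^ (γ / (γ - 1))) μ) :
    ∫ x, f x ^ γ ∂μ ≤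
      (∫ x, f x * w x ∂μ) ^ γ * (∫ x, w x ^ (γ / (γ - 1)) ∂μ) ^ (1 - γ) := by
  have hexp : γ / (γ - 1) * (1 - γ) = -γ := by
    have : γ - 1 ≠ 0 := (sub_neg.2 hγ.2).ne
    field_simp
    ring
  have hfactor : ∫ x, f x ^ γ ∂μ = ∫ x, (f x * w x) ^ γ * (w x ^ (γ / (γ - 1))) ^ (1 - γ) ∂μ := by
    refine integral_congr_ae ?_
    filter_upwards [hf0, hw0] with x hfx hwx
    rw [Real.mul_rpow hfx hwx.le, ← Real.rpow_mul hwx.le, hexp, mul_assoc, ← Real.rpow_add hwx,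
      add_neg_cancel, Real.rpow_zero, mul_one]
  rw [hfactor]
  refine integral_rpow_mul_rpow_le hγ ?_ ?_ hfw hw
  · filter_upwards [hf0, hw0] with x hfx hwx using mul_nonneg hfx hwx.le
  · filter_upwards [hw0] with x hwx using Real.rpow_nonneg hwx.le _

lemma rpow_integral_mul_rpow_integral_le_integral_mul {γ : ℝ} (hγ : γ ∈ Ioo (0 : ℝ) 1)
    (hf0 : 0 ≤ᵐ[μ] f) (hw0 : ∀ᵐ x ∂μ, 0 < w x) (hfw : Integrable (fun x => f x * w x) μ)
    (hw : Integrable (fun x => w x ^ (γ / (γ - 1))) μ) :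
    (∫ x, f x ^ γ ∂μ) ^ (1 / γ) * (∫ x, w x ^ (γ / (γ - 1)) ∂μ) ^ ((γ - 1) / γ) ≤
      ∫ x, f x * w x ∂μ := by
  have hle := integral_rpow_le_integral_mul_rpow hγ hf0 hw0 hfw hw
  have hF : 0 ≤ ∫ x, f x ^ γ ∂μ :=
    integral_nonneg_of_ae (hf0.mono fun x hx => Real.rpow_nonneg hx γ)
  have hK : 0 ≤ ∫ x, w x ^ (γ / (γ - 1)) ∂μ :=
    integral_nonneg_of_ae (hw0.mono fun x hx => Real.rpow_nonneg hx.le _)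
  have hQ : 0 ≤ ∫ x, f x * w x ∂μ := by
    refine integral_nonneg_of_ae ?_
    filter_upwards [hf0, hw0] with x hfx hwx using mul_nonneg hfx hwx.le
  set K := ∫ x, w x ^ (γ / (γ - 1)) ∂μ
  set Q := ∫ x, f x * w x ∂μ
  rcases hK.eq_or_lt with hK0 | hKpos
  · rw [← hK0, Real.zero_rpow (div_ne_zero (sub_neg.2 hγ.2).ne hγ.1.ne'), mul_zero]
    exact hQ
  calc (∫ x, f x ^ γ ∂μ) ^ (1 / γ) * K ^ ((γ - 1) / γ)
      ≤ (Q ^ γ * K ^ (1 - γ)) ^ (1 / γ) * K ^ ((γ - 1) / γ) := by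
        have := hγ.1
        gcongr
    _ = Q * (K ^ ((1 - γ) / γ) * K ^ ((γ - 1) / γ)) := by
        rw [Real.mul_rpow (by positivity) (by positivity), one_div, Real.rpow_rpow_inv hQ hγ.1.ne',
          ← Real.rpow_mul hK, ← div_eq_mul_inv, mul_assoc]
    _ = Q := by
        rw [← Real.rpow_add hKpos, ← add_div, sub_add_sub_cancel, sub_self, zero_div,
          Real.rpow_zero, mul_one]

end Hoelder

lemma integral_sq_nonneg (f : ℝ → ℝ) : 0 ≤ ∫ t in (0 : ℝ)..1, f t ^ 2 :=
  intervalIntegral.integral_nonneg zero_le_one fun _ _ => sq_nonneg _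

lemma sq_integral_le_measureReal_univ_mul_integral_sq {α : Type*} [MeasurableSpace α]
    {μ : Measure α} [IsFiniteMeasure μ] {f : α → ℝ} (hf : MemLp f 2 μ) :
    (∫ x, f x ∂μ) ^ 2 ≤ μ.real univ * ∫ x, f x ^ 2 ∂μ := by
  rcases eq_zero_or_neZero μ with rfl | _
  · simp
  have hjensen := even_two.convexOn_pow.map_average_le (continuousOn_pow 2) isClosed_univ
    (Filter.Eventually.of_forall fun x => mem_univ (f x)) (hf.integrable one_le_two)
    hf.integrable_sq
  have hμ : 0 < μ.real univ := measureReal_univ_pos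
  simp only [average_eq, smul_eq_mul] at hjensen
  field_simp at hjensen
  linarith

lemma abs_intervalIntegral_le_sqrt {f : ℝ → ℝ} {a b : ℝ} (hf : IntervalIntegrable f volume a b)
    (hf2 : IntervalIntegrable (fun t => f t ^ 2) volume a b) :
    |∫ t in a..b, f t| ≤ √(|b - a| * |∫ t in a..b, f t ^ 2|) := by
  have : IsFiniteMeasure (volume.restrict (uIoc a b)) := ⟨by simp [Real.volume_uIoc]⟩
  have hL2 : MemLp f 2 (volume.restrict (uIoc a b)) :=
    (memLp_two_iff_integrable_sq (intervalIntegrable_iff.1 hf).aestronglyMeasurable).2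
      (intervalIntegrable_iff.1 hf2)
  have hnonneg : 0 ≤ ∫ t in uIoc a b, f t ^ 2 := integral_nonneg fun t => sq_nonneg (f t)
  rw [intervalIntegral.abs_integral_eq_abs_integral_uIoc,
    intervalIntegral.abs_integral_eq_abs_integral_uIoc (fun t => f t ^ 2), abs_of_nonneg hnonneg]
  have hCS := sq_integral_le_measureReal_univ_mul_integral_sq hL2
  rw [measureReal_restrict_apply_univ, measureReal_def, Real.volume_uIoc,
    ENNReal.toReal_ofReal (abs_nonneg _)] at hCS
  exact Real.abs_le_sqrt hCS

namespace W12

variable {p : (ℝ → ℝ) × (ℝ → ℝ)}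

lemma one_mem : ((1, 0) : (ℝ → ℝ) × (ℝ → ℝ)) ∈ W12 :=
  ⟨by simp, IntervalIntegrable.zero, by simp⟩

lemma smul_mem (hp : p ∈ W12) (c : ℝ) : c • p ∈ W12 := by
  obtain ⟨hprim, hint, hsq⟩ := hp
  refine ⟨fun x hx => ?_, hint.const_mul c, ?_⟩
  · simp only [Prod.smul_fst, Prod.smul_snd, Pi.smul_apply, smul_eq_mul,
      intervalIntegral.integral_const_mul, hprim x hx, mul_add]
  · simpa only [Prod.smul_snd, Pi.smul_apply, smul_eq_mul, mul_pow] using hsq.const_mul (c ^ 2)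

lemma sub_eq_intervalIntegral (hp : p ∈ W12) {x z : ℝ} (hx : x ∈ Icc (0 : ℝ) 1)
    (hz : z ∈ Icc (0 : ℝ) 1) : p.1 x - p.1 z = ∫ t in z..x, p.2 t := by
  have hint {a : ℝ} (ha : a ∈ Icc (0 : ℝ) 1) : IntervalIntegrable p.2 volume 0 a :=
    hp.2.1.mono_set (by
      rw [uIcc_of_le (zero_le_one' ℝ)]
      exact uIcc_subset_Icc (left_mem_Icc.2 zero_le_one) ha)
  rw [hp.1 x hx, hp.1 z hz, add_sub_add_left_eq_sub,
    intervalIntegral.integral_interval_sub_left (hint hx) (hint hz)]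

lemma continuousOn (hp : p ∈ W12) : ContinuousOn p.1 (Icc 0 1) := by
  have hprim := intervalIntegral.continuousOn_primitive_interval' hp.2.1 left_mem_uIcc
  rw [uIcc_of_le zero_le_one] at hprim
  exact (continuousOn_const.add hprim).congr hp.1

lemma intervalIntegrable_sq (hp : p ∈ W12) :
    IntervalIntegrable (fun t => p.1 t ^ 2) volume 0 1 :=
  ((continuousOn hp).pow 2).intervalIntegrable_of_Icc zero_le_one

lemma abs_sub_le_sqrt_integral_sq_deriv (hp : p ∈ W12) {x z : ℝ} (hx : x ∈ Icc (0 : ℝ) 1)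
    (hz : z ∈ Icc (0 : ℝ) 1) : |p.1 x - p.1 z| ≤ √(∫ t in (0 : ℝ)..1, p.2 t ^ 2) := by
  have hsub : uIcc z x ⊆ uIcc 0 1 := by
    rw [uIcc_of_le (zero_le_one' ℝ)]
    exact uIcc_subset_Icc hz hx
  have hlen : |x - z| ≤ 1 :=
    (abs_sub_le_of_uIcc_subset_uIcc hsub).trans_eq (by rw [sub_zero, abs_one])
  have hmono : |∫ t in z..x, p.2 t ^ 2| ≤ ∫ t in (0 : ℝ)..1, p.2 t ^ 2 :=
    (intervalIntegral.abs_integral_mono_interval (uIoc_subset_uIoc_of_uIcc_subset_uIcc hsub)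
      (Filter.Eventually.of_forall fun t => sq_nonneg (p.2 t)) hp.2.2).trans_eq
      (abs_of_nonneg (integral_sq_nonneg p.2))
  rw [sub_eq_intervalIntegral hp hx hz]
  calc |∫ t in z..x, p.2 t| ≤ √(|x - z| * |∫ t in z..x, p.2 t ^ 2|) :=
        abs_intervalIntegral_le_sqrt (hp.2.1.mono_set hsub) (hp.2.2.mono_set hsub)
    _ ≤ √(∫ t in (0 : ℝ)..1, p.2 t ^ 2) :=
        Real.sqrt_le_sqrt ((mul_le_of_le_one_left (abs_nonneg _) hlen).trans hmono)

lemma exists_abs_eq_sqrt_integral_sq (hp : p ∈ W12) :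
    ∃ z ∈ Icc (0 : ℝ) 1, |p.1 z| = √(∫ t in (0 : ℝ)..1, p.1 t ^ 2) := by
  have hcont : ContinuousOn (fun t => p.1 t ^ 2) (uIcc 0 1) := by
    rw [uIcc_of_le zero_le_one]
    exact (continuousOn hp).pow 2
  obtain ⟨z, hz, hval⟩ := exists_eq_interval_average zero_ne_one hcont
  rw [uIoo_of_le zero_le_one] at hz
  rw [interval_average_eq, sub_zero, inv_one, one_smul] at hval
  exact ⟨z, Ioo_subset_Icc_self hz, by rw [← hval, Real.sqrt_sq_eq_abs]⟩

lemma exists_sign_mul_ge (hp : p ∈ W12) {κ : ℝ}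
    (hκ : ∫ t in (0 : ℝ)..1, p.2 t ^ 2 ≤ κ * ∫ t in (0 : ℝ)..1, p.1 t ^ 2) :
    ∃ s : ℝ, |s| = 1 ∧
      ∀ x ∈ Icc (0 : ℝ) 1, (1 - √κ) * √(∫ t in (0 : ℝ)..1, p.1 t ^ 2) ≤ s * p.1 x := by
  set N := ∫ t in (0 : ℝ)..1, p.1 t ^ 2
  obtain ⟨z, hz, habs⟩ := exists_abs_eq_sqrt_integral_sq hp
  obtain ⟨s, hs, hsz⟩ : ∃ s : ℝ, |s| = 1 ∧ s * p.1 z = √N := by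
    rcases eq_or_eq_neg_of_abs_eq habs with h | h
    · exact ⟨1, abs_one, by rw [one_mul, h]⟩
    · exact ⟨-1, by rw [abs_neg, abs_one], by rw [neg_one_mul, h, neg_neg]⟩
  refine ⟨s, hs, fun x hx => ?_⟩
  have hosc : √N - s * p.1 x ≤ √κ * √N :=
    calc √N - s * p.1 x = s * (p.1 z - p.1 x) := by rw [← hsz, mul_sub]
      _ ≤ |p.1 z - p.1 x| := (le_abs_self _).trans_eq (by rw [abs_mul, hs, one_mul])
      _ ≤ √(∫ t in (0 : ℝ)..1, p.2 t ^ 2) := abs_sub_le_sqrt_integral_sq_deriv hp hz hx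
      _ ≤ √(κ * N) := Real.sqrt_le_sqrt hκ
      _ = √κ * √N := Real.sqrt_mul' κ (integral_sq_nonneg p.1)
  linarith

/-- The square of the norm of `W¹₂[0,1]`. -/
def normSq (p : (ℝ → ℝ) × (ℝ → ℝ)) : ℝ :=
  ∫ t in (0 : ℝ)..1, (p.1 t ^ 2 + p.2 t ^ 2)

lemma normSq_smul (c : ℝ) (p : (ℝ → ℝ) × (ℝ → ℝ)) : normSq (c • p) = c ^ 2 * normSq p := by
  simp only [normSq, Prod.smul_fst, Prod.smul_snd, Pi.smul_apply, smul_eq_mul, mul_pow, ← mul_add,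
    intervalIntegral.integral_const_mul]

lemma normSq_eq_add (hp : p ∈ W12) :
    normSq p = (∫ t in (0 : ℝ)..1, p.1 t ^ 2) + ∫ t in (0 : ℝ)..1, p.2 t ^ 2 :=
  intervalIntegral.integral_add (intervalIntegrable_sq hp) hp.2.2

/-- The part of the unit sphere of `W¹₂[0,1]` that lies in `M_ζ`. -/
def sphereAbove (ζ : ℝ) : Set ((ℝ → ℝ) × (ℝ → ℝ)) :=
  {p ∈ W12 | (∀ x ∈ Icc (0 : ℝ) 1, ζ ≤ p.1 x) ∧ normSq p = 1}

lemma one_mem_sphereAbove : (1, 0) ∈ sphereAbove 1 :=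
  ⟨one_mem, fun _ _ => le_rfl, by simp [normSq]⟩

lemma exists_smul_mem_sphereAbove (hp : p ∈ W12) {κ : ℝ} (hκ1 : κ ≤ 1)
    (hN : 0 < ∫ t in (0 : ℝ)..1, p.1 t ^ 2)
    (hκ : ∫ t in (0 : ℝ)..1, p.2 t ^ 2 ≤ κ * ∫ t in (0 : ℝ)..1, p.1 t ^ 2) :
    ∃ c : ℝ, c ≠ 0 ∧ c • p ∈ sphereAbove ((1 - √κ) / √2) := by
  obtain ⟨s, hs, hsy⟩ := exists_sign_mul_ge hp hκ
  have hS := integral_sq_nonneg p.2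
  have hsplit := normSq_eq_add hp
  set N := ∫ t in (0 : ℝ)..1, p.1 t ^ 2
  have hnorm : 0 < normSq p := by linarith
  have hnorm_le : √(normSq p) ≤ √2 * √N := by
    rw [← Real.sqrt_mul zero_le_two]
    exact Real.sqrt_le_sqrt (by linarith [mul_le_of_le_one_left hN.le hκ1])
  have hs0 : s ≠ 0 := abs_ne_zero.1 (hs ▸ one_ne_zero)
  refine ⟨s / √(normSq p), by positivity, smul_mem hp _, fun x hx => ?_, ?_⟩
  · change (1 - √κ) / √2 ≤ s / √(normSq p) * p.1 x
    rw [div_mul_eq_mul_div, div_le_div_iff₀ (by positivity) (by positivity)]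
    calc (1 - √κ) * √(normSq p) ≤ (1 - √κ) * (√2 * √N) :=
          mul_le_mul_of_nonneg_left hnorm_le (sub_nonneg.2 (Real.sqrt_le_one.2 hκ1))
      _ = (1 - √κ) * √N * √2 := by ring
      _ ≤ s * p.1 x * √2 := mul_le_mul_of_nonneg_right (hsy x hx) (Real.sqrt_nonneg 2)
  · rw [normSq_smul, div_pow, ← sq_abs s, hs, Real.sq_sqrt hnorm.le, one_pow,
      one_div_mul_cancel hnorm.ne']

end W12

section Rayleigh

variable {γ : ℝ} {q y : ℝ → ℝ} {p : (ℝ → ℝ) × (ℝ → ℝ)}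

lemma one_mem_Agamma (γ : ℝ) : 1 ∈ Agamma γ :=
  ⟨intervalIntegrable_const, by simp, by simp⟩

lemma rayleigh_smul (q : ℝ → ℝ) (p : (ℝ → ℝ) × (ℝ → ℝ)) {c : ℝ} (hc : c ≠ 0) :
    Rayleigh q (c • p) = Rayleigh q p := by
  simp only [Rayleigh, Prod.smul_fst, Prod.smul_snd, Pi.smul_apply, smul_eq_mul, mul_pow,
    mul_left_comm _ (c ^ 2), ← mul_add, intervalIntegral.integral_const_mul]
  exact mul_div_mul_left _ _ (pow_ne_zero 2 hc)

lemma intervalIntegrable_mul_sq (hq : IntervalIntegrable q volume 0 1)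
    (hy : ContinuousOn y (Icc 0 1)) : IntervalIntegrable (fun t => q t * y t ^ 2) volume 0 1 := by
  refine hq.mul_continuousOn ?_
  rw [uIcc_of_le zero_le_one]
  exact hy.pow 2

lemma rayleigh_eq_div (hp : p ∈ W12) (hq : IntervalIntegrable q volume 0 1) :
    Rayleigh q p = ((∫ t in (0 : ℝ)..1, p.2 t ^ 2) + ∫ t in (0 : ℝ)..1, q t * p.1 t ^ 2) /
      ∫ t in (0 : ℝ)..1, p.1 t ^ 2 := by
  rw [Rayleigh, intervalIntegral.integral_add hp.2.2
    (intervalIntegrable_mul_sq hq (W12.continuousOn hp))]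

lemma rayleigh_nonneg (hq0 : ∀ᵐ t ∂volume.restrict (Icc (0 : ℝ) 1), 0 ≤ q t)
    (p : (ℝ → ℝ) × (ℝ → ℝ)) : 0 ≤ Rayleigh q p := by
  refine div_nonneg (intervalIntegral.integral_nonneg_of_ae_restrict zero_le_one ?_)
    (integral_sq_nonneg p.1)
  filter_upwards [hq0] with t ht
  positivity

lemma integral_sq_deriv_le_rayleigh_mul (hq : IntervalIntegrable q volume 0 1)
    (hq0 : ∀ᵐ t ∂volume.restrict (Icc (0 : ℝ) 1), 0 ≤ q t) (hp : p ∈ W12)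
    (hN : 0 < ∫ t in (0 : ℝ)..1, p.1 t ^ 2) :
    ∫ t in (0 : ℝ)..1, p.2 t ^ 2 ≤ Rayleigh q p * ∫ t in (0 : ℝ)..1, p.1 t ^ 2 := by
  have hQ : 0 ≤ ∫ t in (0 : ℝ)..1, q t * p.1 t ^ 2 := by
    refine intervalIntegral.integral_nonneg_of_ae_restrict zero_le_one ?_
    filter_upwards [hq0] with t ht
    positivity
  rw [rayleigh_eq_div hp hq, div_mul_cancel₀ _ hN.ne']
  exact le_add_of_nonneg_right hQ

lemma lambda1_le_rayleigh (hq0 : ∀ᵐ t ∂volume.restrict (Icc (0 : ℝ) 1), 0 ≤ q t)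
    (hp : p ∈ W12) (hN : 0 < ∫ t in (0 : ℝ)..1, p.1 t ^ 2) : lambda1 q ≤ Rayleigh q p := by
  refine csInf_le ⟨0, ?_⟩ ⟨p, hp, hN, rfl⟩
  rintro _ ⟨p, -, -, rfl⟩
  exact rayleigh_nonneg hq0 p

lemma lambda1_nonneg (hq0 : ∀ᵐ t ∂volume.restrict (Icc (0 : ℝ) 1), 0 ≤ q t) :
    0 ≤ lambda1 q := by
  refine Real.sInf_nonneg ?_
  rintro _ ⟨p, -, -, rfl⟩
  exact rayleigh_nonneg hq0 p

lemma mGamma_le_lambda1 (hq : q ∈ Agamma γ) : mGamma γ ≤ lambda1 q := by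
  refine csInf_le ⟨0, ?_⟩ (mem_image_of_mem lambda1 hq)
  rintro _ ⟨q, hq, rfl⟩
  exact lambda1_nonneg hq.2.1

lemma exists_rayleigh_lt_of_mGamma_lt {a : ℝ} (ha : mGamma γ < a) :
    ∃ q ∈ Agamma γ, ∃ p ∈ W12, 0 < (∫ t in (0 : ℝ)..1, p.1 t ^ 2) ∧ Rayleigh q p < a := by
  obtain ⟨_, ⟨q, hq, rfl⟩, hqa⟩ :=
    exists_lt_of_csInf_lt ⟨_, mem_image_of_mem lambda1 (one_mem_Agamma γ)⟩ ha
  have hne : {r | ∃ p ∈ W12, 0 < (∫ t in (0 : ℝ)..1, p.1 t ^ 2) ∧ r = Rayleigh q p}.Nonempty :=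
    ⟨_, _, W12.one_mem, by simp, rfl⟩
  obtain ⟨_, ⟨p, hp, hN, rfl⟩, hpa⟩ := exists_lt_of_csInf_lt hne hqa
  exact ⟨q, hq, p, hp, hN, hpa⟩

end Rayleigh

section Infimum

variable {γ : ℝ} {q y : ℝ → ℝ} {p : (ℝ → ℝ) × (ℝ → ℝ)}

lemma intervalIntegrable_rpow_of_pos (hy : ContinuousOn y (Icc 0 1))
    (hpos : ∀ x ∈ Icc (0 : ℝ) 1, 0 < y x) (e : ℝ) :
    IntervalIntegrable (fun t => y t ^ e) volume 0 1 :=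
  (hy.rpow_const fun x hx => Or.inl (hpos x hx).ne').intervalIntegrable_of_Icc zero_le_one

lemma integral_rpow_pos (hy : ContinuousOn y (Icc 0 1)) (hpos : ∀ x ∈ Icc (0 : ℝ) 1, 0 < y x)
    (e : ℝ) : 0 < ∫ t in (0 : ℝ)..1, y t ^ e :=
  intervalIntegral.intervalIntegral_pos_of_pos_on (intervalIntegrable_rpow_of_pos hy hpos e)
    (fun x hx => Real.rpow_pos_of_pos (hpos x (Ioo_subset_Icc_self hx)) e) one_pos

lemma rpow_integral_le_integral_mul_sq (hγ : γ ∈ Ioo (0 : ℝ) 1) (hq : q ∈ Agamma γ)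
    (hy : ContinuousOn y (Icc 0 1)) (hpos : ∀ x ∈ Icc (0 : ℝ) 1, 0 < y x) :
    (∫ t in (0 : ℝ)..1, y t ^ (2 * γ / (γ - 1))) ^ ((γ - 1) / γ) ≤
      ∫ t in (0 : ℝ)..1, q t * y t ^ 2 := by
  obtain ⟨hqi, hq0, hq1⟩ := hq
  have hexp : EqOn (fun t => y t ^ (2 * γ / (γ - 1))) (fun t => (y t ^ 2) ^ (γ / (γ - 1)))
      (Ioc 0 1) := fun t ht => by
    dsimp only
    rw [← Real.rpow_two, ← Real.rpow_mul (hpos t (Ioc_subset_Icc_self ht)).le, mul_div_assoc]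
  have hyi := (intervalIntegrable_rpow_of_pos hy hpos (2 * γ / (γ - 1))).1.congr_fun hexp
    measurableSet_Ioc
  have hw0 : ∀ᵐ t ∂volume.restrict (Ioc (0 : ℝ) 1), 0 < y t ^ 2 := by
    filter_upwards [ae_restrict_mem measurableSet_Ioc] with t ht
    exact pow_pos (hpos t (Ioc_subset_Icc_self ht)) 2
  have h := rpow_integral_mul_rpow_integral_le_integral_mul hγ
    (ae_restrict_of_ae_restrict_of_subset Ioc_subset_Icc_self hq0) hw0
    (intervalIntegrable_mul_sq hqi hy).1 hyi
  rw [← setIntegral_congr_fun measurableSet_Ioc hexp] at h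
  simpa only [← intervalIntegral.integral_of_le zero_le_one, hq1, Real.one_rpow, one_mul] using h

/-- The multiple of `y^{2/(γ-1)}` that lies in `A_γ`; it is the minimizer of the Rayleigh quotient
of a positive `y` over `A_γ`. -/
def extremalPotential (γ : ℝ) (y : ℝ → ℝ) (t : ℝ) : ℝ :=
  (∫ x in (0 : ℝ)..1, y x ^ (2 * γ / (γ - 1))) ^ (-1 / γ) * y t ^ (2 / (γ - 1))

lemma extremalPotential_mem_Agamma (hγ : γ ≠ 0) (hy : ContinuousOn y (Icc 0 1))
    (hpos : ∀ x ∈ Icc (0 : ℝ) 1, 0 < y x) : extremalPotential γ y ∈ Agamma γ := by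
  have hK := integral_rpow_pos hy hpos (2 * γ / (γ - 1))
  refine ⟨(intervalIntegrable_rpow_of_pos hy hpos _).const_mul _, ?_, ?_⟩
  · filter_upwards [ae_restrict_mem measurableSet_Icc] with t ht
    exact mul_nonneg (Real.rpow_nonneg hK.le _) (Real.rpow_nonneg (hpos t ht).le _)
  · have hpow : EqOn (fun t => extremalPotential γ y t ^ γ)
        (fun t => (∫ x in (0 : ℝ)..1, y x ^ (2 * γ / (γ - 1)))⁻¹ * y t ^ (2 * γ / (γ - 1)))
        (uIcc 0 1) := fun t ht => by
      rw [uIcc_of_le zero_le_one] at ht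
      dsimp only [extremalPotential]
      rw [Real.mul_rpow (Real.rpow_nonneg hK.le _) (Real.rpow_nonneg (hpos t ht).le _),
        ← Real.rpow_mul hK.le, ← Real.rpow_mul (hpos t ht).le, div_mul_cancel₀ _ hγ,
        Real.rpow_neg_one, div_mul_eq_mul_div]
    rw [intervalIntegral.integral_congr hpow, intervalIntegral.integral_const_mul,
      inv_mul_cancel₀ hK.ne']

lemma integral_extremalPotential_mul_sq (hγ0 : γ ≠ 0) (hγ1 : γ ≠ 1)
    (hy : ContinuousOn y (Icc 0 1)) (hpos : ∀ x ∈ Icc (0 : ℝ) 1, 0 < y x) :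
    ∫ t in (0 : ℝ)..1, extremalPotential γ y t * y t ^ 2 =
      (∫ t in (0 : ℝ)..1, y t ^ (2 * γ / (γ - 1))) ^ ((γ - 1) / γ) := by
  have hK := integral_rpow_pos hy hpos (2 * γ / (γ - 1))
  have hexp : 2 / (γ - 1) + 2 = 2 * γ / (γ - 1) := by
    have := sub_ne_zero.2 hγ1
    field_simp
    ring
  have hmul : EqOn (fun t => extremalPotential γ y t * y t ^ 2)
      (fun t => (∫ x in (0 : ℝ)..1, y x ^ (2 * γ / (γ - 1))) ^ (-1 / γ) *
        y t ^ (2 * γ / (γ - 1))) (uIcc 0 1) := fun t ht => by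
    rw [uIcc_of_le zero_le_one] at ht
    dsimp only [extremalPotential]
    rw [mul_assoc, ← Real.rpow_two, ← Real.rpow_add (hpos t ht), hexp]
  rw [intervalIntegral.integral_congr hmul, intervalIntegral.integral_const_mul,
    ← Real.rpow_add_one hK.ne', div_add_one hγ0, neg_add_eq_sub]

lemma isLeast_rayleigh_image_Agamma (hγ : γ ∈ Ioo (0 : ℝ) 1) (hp : p ∈ W12)
    (hpos : ∀ x ∈ Icc (0 : ℝ) 1, 0 < p.1 x) :
    IsLeast ((Rayleigh · p) '' Agamma γ) (Gg γ p) := by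
  have hy := W12.continuousOn hp
  refine ⟨⟨extremalPotential γ p.1, extremalPotential_mem_Agamma hγ.1.ne' hy hpos, ?_⟩, ?_⟩
  · dsimp only
    rw [rayleigh_eq_div hp (extremalPotential_mem_Agamma hγ.1.ne' hy hpos).1,
      integral_extremalPotential_mul_sq hγ.1.ne' hγ.2.ne hy hpos, Gg, Jg]
  · rintro _ ⟨q, hq, rfl⟩
    dsimp only
    rw [rayleigh_eq_div hp hq.1, Gg, Jg]
    have := integral_sq_nonneg p.1
    have := rpow_integral_le_integral_mul_sq hγ hq hy hpos
    gcongr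

lemma Gg_one (γ : ℝ) : Gg γ (1, 0) = 1 := by
  simp [Gg, Jg]

lemma mGamma_le_Gg (hγ : γ ∈ Ioo (0 : ℝ) 1) (hp : p ∈ W12)
    (hpos : ∀ x ∈ Icc (0 : ℝ) 1, 0 < p.1 x) : mGamma γ ≤ Gg γ p := by
  have hN : 0 < ∫ t in (0 : ℝ)..1, p.1 t ^ 2 := by
    simpa only [Real.rpow_two] using integral_rpow_pos (W12.continuousOn hp) hpos 2
  obtain ⟨q, hq, hG⟩ := (isLeast_rayleigh_image_Agamma hγ hp hpos).1
  exact hG ▸ (mGamma_le_lambda1 hq).trans (lambda1_le_rayleigh hq.2.1 hp hN)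

lemma exists_pos_forall_exists_mem_sphereAbove_Gg_lt (hγ : γ ∈ Ioo (0 : ℝ) 1) :
    ∃ ζ > 0, ∀ a > mGamma γ, ∃ p ∈ W12.sphereAbove ζ, Gg γ p < a := by
  rcases le_or_gt 1 (mGamma γ) with hm | hm
  · refine ⟨1, one_pos, fun a ha => ⟨(1, 0), W12.one_mem_sphereAbove, ?_⟩⟩
    rw [Gg_one]
    exact hm.trans_lt ha
  obtain ⟨κ, hκ, hκ1⟩ := exists_between hm
  have hsqrt : √κ < 1 := (Real.sqrt_lt' one_pos).2 (by rwa [one_pow])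
  have hζ : 0 < (1 - √κ) / √2 := div_pos (sub_pos.2 hsqrt) (Real.sqrt_pos.2 two_pos)
  refine ⟨(1 - √κ) / √2, hζ, fun a ha => ?_⟩
  obtain ⟨q, hq, p, hp, hN, hR⟩ := exists_rayleigh_lt_of_mGamma_lt (lt_min hκ ha)
  obtain ⟨hRκ, hRa⟩ := lt_min_iff.1 hR
  have hderiv : ∫ t in (0 : ℝ)..1, p.2 t ^ 2 ≤ κ * ∫ t in (0 : ℝ)..1, p.1 t ^ 2 :=
    (integral_sq_deriv_le_rayleigh_mul hq.1 hq.2.1 hp hN).trans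
      (mul_le_mul_of_nonneg_right hRκ.le hN.le)
  obtain ⟨c, hc, hcp⟩ := W12.exists_smul_mem_sphereAbove hp hκ1.le hN hderiv
  refine ⟨c • p, hcp, ?_⟩
  have hpos : ∀ x ∈ Icc (0 : ℝ) 1, 0 < (c • p).1 x := fun x hx => hζ.trans_le (hcp.2.1 x hx)
  calc Gg γ (c • p) ≤ Rayleigh q (c • p) :=
        (isLeast_rayleigh_image_Agamma hγ hcp.1 hpos).2 (mem_image_of_mem _ hq)
    _ = Rayleigh q p := rayleigh_smul q p hc
    _ < a := hRa

end Infimum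

/-- There exists `ζ > 0` such that `m_γ` is the infimum of `G_γ` over all
`y ∈ M_ζ` lying on the unit sphere of `W¹₂[0,1]`. -/
theorem mGamma_eq_inf_on_sphere (γ : ℝ) (hγ : γ ∈ Ioo (0:ℝ) 1) :
    ∃ ζ > (0:ℝ), mGamma γ = sInf (Gg γ ''
      {p ∈ W12 | (∀ x ∈ Icc (0:ℝ) 1, ζ ≤ p.1 x) ∧
        (∫ t in (0:ℝ)..1, ((p.1 t) ^ 2 + (p.2 t) ^ 2)) = 1}) := by
  obtain ⟨ζ, hζ, happrox⟩ := exists_pos_forall_exists_mem_sphereAbove_Gg_lt hγ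
  have hne : (W12.sphereAbove ζ).Nonempty := by
    obtain ⟨p, hp, -⟩ := happrox (mGamma γ + 1) (lt_add_one _)
    exact ⟨p, hp⟩
  have hlower : ∀ g ∈ Gg γ '' W12.sphereAbove ζ, mGamma γ ≤ g := by
    rintro _ ⟨p, ⟨hp, hge, -⟩, rfl⟩
    exact mGamma_le_Gg hγ hp fun x hx => hζ.trans_le (hge x hx)
  have hinf : sInf (Gg γ '' W12.sphereAbove ζ) = mGamma γ :=
    csInf_eq_of_forall_ge_of_forall_gt_exists_lt (hne.image _) hlower fun a ha =>
      exists_mem_image.2 (happrox a ha)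
  exact ⟨ζ, hζ, hinf.symm⟩
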